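/- arXiv:1505.06234 — 2 statements merged into one kernel-verified Lean document; each statement's English description precedes it below -/
import Mathlib

section
/- Let n and k be positive integers with k ≥ 2, let G be a graph with χ_P(G) = k and |V(G)| = n, and let m ≥ n+k+2. If there exists a special enumeration of V(G), then χ_P(R_m(G)) = k; otherwise χ_P(R_m(G)) = k+1. -/
open SimpleGraph

universe u
variable {V : Type u}

/-- Closed neighborhood of a vertex set. -/
def closedNbhd (G : SimpleGraph V) (U : Set V) : Set V :=
  U ∪ {v | ∃ u ∈ U, G.Adj u v}

/-- Bag `X_ℓ = N[{v_1,…,v_ℓ}] \ {v_1,…,v_{ℓ-1}}` of the enumeration `σ`. -/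
def bagX {n : ℕ} (G : SimpleGraph V) (σ : Fin n ≃ V) (ℓ : Fin n) : Set V :=
  closedNbhd G {v | ∃ j ≤ ℓ, v = σ j} \ {v | ∃ j < ℓ, v = σ j}

/-- Chromatic number of the subgraph induced by `S`. -/
noncomputable def chrom (G : SimpleGraph V) (S : Set V) : ℕ :=
  sInf {k | (G.induce S).Colorable k}

/-- Chromatic number of the path-decomposition `P_σ^G`. -/
noncomputable def decompChrom {n : ℕ} (G : SimpleGraph V) (σ : Fin n ≃ V) : ℕ :=
  sInf {k | ∀ ℓ, (G.induce (bagX G σ ℓ)).Colorable k}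

/-- `B` is a path-decomposition of `G`. -/
def IsPathDecomp (G : SimpleGraph V) {s : ℕ} (B : Fin s → Set V) : Prop :=
  (∀ v, ∃ t, v ∈ B t) ∧
  (∀ u v, G.Adj u v → ∃ t, u ∈ B t ∧ v ∈ B t) ∧
  (∀ v (t₁ t₂ t₃ : Fin s), t₁ ≤ t₂ → t₂ ≤ t₃ → v ∈ B t₁ → v ∈ B t₃ → v ∈ B t₂)

/-- Path-chromatic number. -/
noncomputable def pathChromatic (G : SimpleGraph V) : ℕ :=
  sInf {k | ∃ (s : ℕ) (B : Fin s → Set V), IsPathDecomp G B ∧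
    ∀ t, (G.induce (B t)).Colorable k}

/-- `(T, B)` is a tree-decomposition of `G`. -/
def IsTreeDecomp {ι : Type u} (G : SimpleGraph V) (T : SimpleGraph ι) (B : ι → Set V) : Prop :=
  T.IsTree ∧
  (∀ v, ∃ t, v ∈ B t) ∧
  (∀ u v, G.Adj u v → ∃ t, u ∈ B t ∧ v ∈ B t) ∧
  (∀ v, (T.induce {t | v ∈ B t}).Connected)

/-- Tree-chromatic number. -/
noncomputable def treeChromatic (G : SimpleGraph V) : ℕ :=
  sInf {k | ∃ (ι : Type u) (T : SimpleGraph ι) (B : ι → Set V),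
    IsTreeDecomp G T B ∧ ∀ t, (G.induce (B t)).Colorable k}

/-- A special enumeration. -/
def IsSpecial {n : ℕ} (G : SimpleGraph V) (σ : Fin n ≃ V) : Prop :=
  decompChrom G σ = pathChromatic G ∧
  ∀ i : Fin n, chrom G (bagX G σ i) = pathChromatic G →
    ∀ j : Fin n, j < i → ¬ G.Adj (σ j) (σ i)

/-- The graph `R_m(G)`; the vertex `(i, none)` plays the role of `(i, v₀)`. -/
def Rm (G : SimpleGraph V) (m : ℕ) : SimpleGraph (Fin m × Option V) :=
  SimpleGraph.fromRel (fun p q =>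
    (p.1 = q.1 ∧ p.2 = none) ∨
    (p.1 ≠ q.1 ∧ ∃ u v, p.2 = some u ∧ q.2 = some v ∧ G.Adj u v))

/-- `[I, U] = { (i, v) : i ∈ I, v ∈ U }` inside `R_m(G)`. -/
def box {m : ℕ} (I : Set (Fin m)) (U : Set V) : Set (Fin m × Option V) :=
  {p | p.1 ∈ I ∧ ∃ v ∈ U, p.2 = some v}

/-- Index of the first vertex in the enumeration `μ` satisfying `P`. -/
noncomputable def firstIdx {N : ℕ} {W : Type*} (μ : Fin N ≃ W) (P : W → Prop) : ℕ :=
  sInf {ℓ : ℕ | ∃ h : ℓ < N, P (μ ⟨ℓ, h⟩)}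

/-- The cycle `C_n`: `v_j ~ v_{j'}` iff `|j - j'| ∈ {1, n-1}`. -/
def cyc (n : ℕ) : SimpleGraph (Fin n) :=
  SimpleGraph.fromRel (fun a b => (b : ℕ) - (a : ℕ) = 1 ∨ (b : ℕ) - (a : ℕ) = n - 1)

/-- The Mycielskian of a graph. -/
def mycielskian (G : SimpleGraph V) : SimpleGraph (Option (V ⊕ V)) :=
  SimpleGraph.fromRel (fun a b =>
    match a, b with
    | some (Sum.inl u), some (Sum.inl v) => G.Adj u v
    | some (Sum.inr u), some (Sum.inl v) => G.Adj u v
    | none, some (Sum.inr _) => True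
    | _, _ => False)

/-- Vertex types and graphs of the Mycielski family: `MycS 2` is a single edge. -/
def MycS : ℕ → Σ W : Type, SimpleGraph W
  | 0 => ⟨Empty, ⊥⟩
  | 1 => ⟨Empty, ⊥⟩
  | 2 => ⟨Fin 2, ⊤⟩
  | (n + 3) => ⟨Option ((MycS (n + 2)).1 ⊕ (MycS (n + 2)).1), mycielskian (MycS (n + 2)).2⟩

/-- The vertex type of the `k`-Mycielski graph. -/
def MycV (k : ℕ) : Type := (MycS k).1

/-- The `k`-Mycielski graph `M_k`. -/
def Myc (k : ℕ) : SimpleGraph (MycV k) := (MycS k).2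

/-- Colourability of an induced subgraph in terms of a global function to `ℕ`. -/
theorem col_iff {W : Type*} (G : SimpleGraph W) (S : Set W) (c : ℕ) :
    (G.induce S).Colorable c ↔ ∃ f : W → ℕ, (∀ v ∈ S, f v < c) ∧
      ∀ u ∈ S, ∀ v ∈ S, G.Adj u v → f u ≠ f v := by
  classical
  constructor
  · rintro ⟨C⟩
    refine ⟨fun v => if h : v ∈ S then (C ⟨v, h⟩ : ℕ) else 0, ?_, ?_⟩
    · intro v hv
      simp [hv]
    · intro u hu v hv huv
      have : C ⟨u, hu⟩ ≠ C ⟨v, hv⟩ := C.valid (by simpa using huv)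
      simpa [hu, hv, Fin.ext_iff] using this
  · rintro ⟨f, hf, hp⟩
    refine ⟨SimpleGraph.Coloring.mk (fun v => ⟨f v.1, hf v.1 v.2⟩) ?_⟩
    intro u v huv h
    exact hp u.1 u.2 v.1 v.2 (by simpa using huv) (by simpa [Fin.ext_iff] using h)

theorem col_mono {W : Type*} (G : SimpleGraph W) {S T : Set W} {c d : ℕ} (hST : S ⊆ T)
    (hcd : c ≤ d) (h : (G.induce T).Colorable c) : (G.induce S).Colorable d := by
  rw [col_iff] at h ⊢
  obtain ⟨f, hf, hp⟩ := h
  exact ⟨f, fun v hv => (hf v (hST hv)).trans_le hcd,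
    fun u hu v hv => hp u (hST hu) v (hST hv)⟩

theorem rm_adj_none {G : SimpleGraph V} {m : ℕ} (i : Fin m) (v : V) :
    (Rm G m).Adj (i, none) (i, some v) := by
  simp [Rm]

theorem rm_adj_some {G : SimpleGraph V} {m : ℕ} {i j : Fin m} {u v : V} :
    (Rm G m).Adj (i, some u) (j, some v) ↔ i ≠ j ∧ G.Adj u v := by
  simp only [Rm, SimpleGraph.fromRel_adj]
  constructor
  · rintro ⟨-, (h | ⟨h, a, b, ha, hb, hab⟩) | (h | ⟨h, a, b, ha, hb, hab⟩)⟩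
    · simp at h
    · simp at ha hb; subst ha hb; exact ⟨h, hab⟩
    · simp at h
    · simp at ha hb; subst ha hb; exact ⟨fun e => h e.symm, hab.symm⟩
  · rintro ⟨h, hab⟩
    refine ⟨fun e => h (congrArg Prod.fst e), Or.inl (Or.inr ⟨h, u, v, rfl, rfl, hab⟩)⟩

theorem rm_adj_none_some {G : SimpleGraph V} {m : ℕ} {i j : Fin m} {v : V} :
    (Rm G m).Adj (i, none) (j, some v) ↔ i = j := by
  simp [Rm]

theorem rm_adj_none_none {G : SimpleGraph V} {m : ℕ} {i j : Fin m} :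
    ¬ (Rm G m).Adj (i, none) (j, none) := by
  simp [Rm]; grind

theorem mem_bagX {n : ℕ} (G : SimpleGraph V) (σ : Fin n ≃ V) (ℓ b : Fin n) :
    σ b ∈ bagX G σ ℓ ↔ ℓ ≤ b ∧ (b = ℓ ∨ ∃ a ≤ ℓ, G.Adj (σ a) (σ b)) := by
  simp only [bagX, closedNbhd, Set.mem_diff, Set.mem_union, Set.mem_setOf_eq,
    EmbeddingLike.apply_eq_iff_eq]
  constructor
  · rintro ⟨h1, h2⟩
    have hb : ℓ ≤ b := by
      by_contra hlt
      exact h2 ⟨b, not_le.mp hlt, rfl⟩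
    refine ⟨hb, ?_⟩
    rcases h1 with ⟨j, hj, rfl⟩ | ⟨u, ⟨j, hj, rfl⟩, hadj⟩
    · left; exact le_antisymm hj hb
    · right; exact ⟨j, hj, hadj⟩
  · rintro ⟨h1, h2⟩
    refine ⟨?_, ?_⟩
    · rcases h2 with rfl | ⟨a, ha, hadj⟩
      · left; exact ⟨b, le_rfl, rfl⟩
      · right; exact ⟨_, ⟨a, ha, rfl⟩, hadj⟩
    · rintro ⟨j, hj, rfl⟩
      exact absurd hj (not_lt.mpr h1)

theorem bagX_decomp {n : ℕ} (G : SimpleGraph V) (σ : Fin n ≃ V) :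
    IsPathDecomp G (bagX G σ) := by
  refine ⟨?_, ?_, ?_⟩
  · intro v
    obtain ⟨b, rfl⟩ := σ.surjective v
    exact ⟨b, (mem_bagX G σ b b).2 ⟨le_rfl, Or.inl rfl⟩⟩
  · intro u v huv
    obtain ⟨a, rfl⟩ := σ.surjective u
    obtain ⟨b, rfl⟩ := σ.surjective v
    rcases le_total a b with h | h
    · exact ⟨a, (mem_bagX G σ _ _).2 ⟨le_rfl, Or.inl rfl⟩,
        (mem_bagX G σ _ _).2 ⟨h, Or.inr ⟨a, le_rfl, huv⟩⟩⟩
    · exact ⟨b, (mem_bagX G σ _ _).2 ⟨h, Or.inr ⟨b, le_rfl, huv.symm⟩⟩,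
        (mem_bagX G σ _ _).2 ⟨le_rfl, Or.inl rfl⟩⟩
  · intro v t₁ t₂ t₃ h12 h23 h1 h3
    obtain ⟨b, rfl⟩ := σ.surjective v
    rw [mem_bagX] at h1 h3 ⊢
    refine ⟨h23.trans h3.1, ?_⟩
    rcases h1.2 with rfl | ⟨a, ha, hadj⟩
    · left; exact le_antisymm (h23.trans h3.1 |> fun _ => h12) (h23.trans h3.1)
    · right; exact ⟨a, ha.trans h12, hadj⟩

/-- Two adjacent vertices cannot both see the same colour twice. -/
theorem rep_ne {G : SimpleGraph V} {m : ℕ} {B : Set (Fin m × Option V)}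
    {f : Fin m × Option V → ℕ}
    (hp : ∀ u ∈ B, ∀ v ∈ B, (Rm G m).Adj u v → f u ≠ f v) {u v : V} (huv : G.Adj u v)
    {j₁ j₂ j₀ : Fin m} (hj : j₁ ≠ j₂) (h1 : (j₁, some u) ∈ B) (h2 : (j₂, some u) ∈ B)
    (h0 : (j₀, some v) ∈ B) (hf : f (j₁, some u) = f (j₂, some u)) :
    f (j₁, some u) ≠ f (j₀, some v) := by
  by_cases h : j₁ = j₀
  · subst h
    rw [hf]
    exact hp _ h2 _ h0 (rm_adj_some.2 ⟨hj.symm, huv⟩)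
  · exact hp _ h1 _ h0 (rm_adj_some.2 ⟨h, huv⟩)

theorem exists_rep {m k : ℕ} {J : Finset (Fin m)} (hJ : k + 1 ≤ J.card) (g : Fin m → ℕ)
    (hg : ∀ j ∈ J, g j < k) : ∃ j₁ ∈ J, ∃ j₂ ∈ J, j₁ ≠ j₂ ∧ g j₁ = g j₂ := by
  apply Finset.exists_ne_map_eq_of_card_lt_of_maps_to (t := Finset.range k)
  · simp; omega
  · intro j hj
    simpa using hg j hj

/-- Key claim: a bag with `J × X` and some `(j₀, v₀)` saves one colour on `X`. -/
theorem key_claim {G : SimpleGraph V} {m k : ℕ} {B : Set (Fin m × Option V)}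
    (hB : ((Rm G m).induce B).Colorable k) {J : Finset (Fin m)} (hJ : k + 1 ≤ J.card)
    {X : Set V} (hX : ∀ j ∈ J, ∀ w ∈ X, (j, some w) ∈ B) {j₀ : Fin m} (hj₀ : j₀ ∈ J)
    (h0 : (j₀, none) ∈ B) : (G.induce X).Colorable (k - 1) := by
  classical
  rw [col_iff] at hB
  obtain ⟨f, hf, hp⟩ := hB
  set α := f (j₀, none) with hα
  have hαk : α < k := hf _ h0
  have hne : ∀ w ∈ X, f (j₀, some w) ≠ α := fun w hw =>
    (hp _ h0 _ (hX _ hj₀ w hw) (rm_adj_none _ _)).symm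
  have key : ∀ w, ∃ c, w ∈ X → c < k ∧ c ≠ α ∧
      ((∃ j₁ ∈ J, ∃ j₂ ∈ J, j₁ ≠ j₂ ∧ f (j₁, some w) = f (j₂, some w) ∧ c = f (j₁, some w)) ∨
       (c = f (j₀, some w) ∧
        ∃ j₁ ∈ J, ∃ j₂ ∈ J, j₁ ≠ j₂ ∧ f (j₁, some w) = f (j₂, some w) ∧ f (j₁, some w) = α)) := by
    intro w
    by_cases hw : w ∈ X
    swap
    · exact ⟨0, fun h => absurd h hw⟩
    by_cases h : ∃ j₁ ∈ J, ∃ j₂ ∈ J, j₁ ≠ j₂ ∧ f (j₁, some w) = f (j₂, some w) ∧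
        f (j₁, some w) ≠ α
    · obtain ⟨j₁, h1, j₂, h2, hj, he, hn⟩ := h
      exact ⟨f (j₁, some w), fun _ => ⟨hf _ (hX _ h1 _ hw), hn,
        Or.inl ⟨j₁, h1, j₂, h2, hj, he, rfl⟩⟩⟩
    · obtain ⟨j₁, h1, j₂, h2, hj, he⟩ := exists_rep hJ (fun j => f (j, some w))
        (fun j hj => hf _ (hX j hj w hw))
      have hα1 : f (j₁, some w) = α := by
        by_contra hn
        exact h ⟨j₁, h1, j₂, h2, hj, he, hn⟩
      exact ⟨f (j₀, some w), fun _ => ⟨hf _ (hX _ hj₀ _ hw), hne w hw,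
        Or.inr ⟨rfl, j₁, h1, j₂, h2, hj, he, hα1⟩⟩⟩
  choose g hg using key
  have hgp : ∀ u ∈ X, ∀ v ∈ X, G.Adj u v → g u ≠ g v := by
    intro u hu v hv huv
    obtain ⟨-, -, hu'⟩ := hg u hu
    obtain ⟨-, -, hv'⟩ := hg v hv
    rcases hu' with ⟨a, ha, b, hb, hab, he, hc⟩ | ⟨hc, a, ha, b, hb, hab, he, hc'⟩ <;>
    rcases hv' with ⟨a', ha', b', hb', hab', he', hd⟩ | ⟨hd, a', ha', b', hb', hab', he', hd'⟩
    · rw [hc, hd]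
      exact rep_ne hp huv hab (hX _ ha _ hu) (hX _ hb _ hu) (hX _ ha' _ hv) he
    · rw [hc, hd]
      exact rep_ne hp huv hab (hX _ ha _ hu) (hX _ hb _ hu) (hX _ hj₀ _ hv) he
    · rw [hc, hd]
      exact (rep_ne hp huv.symm hab' (hX _ ha' _ hv) (hX _ hb' _ hv) (hX _ hj₀ _ hu) he').symm
    · exact absurd (hc'.trans hd'.symm)
        (rep_ne hp huv hab (hX _ ha _ hu) (hX _ hb _ hu) (hX _ ha' _ hv) he)
  rw [col_iff]
  refine ⟨fun w => if g w < α then g w else g w - 1, ?_, ?_⟩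
  · intro w hw
    obtain ⟨h1, h2, -⟩ := hg w hw
    dsimp only
    split_ifs <;> omega
  · intro u hu v hv huv
    have := hgp u hu v hv huv
    obtain ⟨h1, h2, -⟩ := hg u hu
    obtain ⟨h3, h4, -⟩ := hg v hv
    dsimp only
    split_ifs <;> omega

/-- First and last bags of each vertex. -/
theorem exists_first_last {W : Type*} {G : SimpleGraph W} {s : ℕ} {B : Fin s → Set W}
    (hB : IsPathDecomp G B) : ∃ first last : W → Fin s,
      (∀ x t, x ∈ B t ↔ first x ≤ t ∧ t ≤ last x) ∧
      (∀ x y, G.Adj x y → first x ≤ last y) := by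
  classical
  obtain ⟨h1, h2, h3⟩ := hB
  have hl : ∀ x, ∃ t, x ∈ B t ∧ ∀ t', x ∈ B t' → t' ≤ t := by
    intro x
    obtain ⟨t0, ht0⟩ := h1 x
    obtain ⟨t, ht, hmax⟩ := Finset.exists_max_image (Finset.univ.filter fun t => x ∈ B t) id
      ⟨t0, by simpa using ht0⟩
    exact ⟨t, by simpa using ht, fun t' ht' => hmax t' (by simpa using ht')⟩
  have hf : ∀ x, ∃ t, x ∈ B t ∧ ∀ t', x ∈ B t' → t ≤ t' := by
    intro x
    obtain ⟨t0, ht0⟩ := h1 x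
    obtain ⟨t, ht, hmax⟩ := Finset.exists_min_image (Finset.univ.filter fun t => x ∈ B t) id
      ⟨t0, by simpa using ht0⟩
    exact ⟨t, by simpa using ht, fun t' ht' => hmax t' (by simpa using ht')⟩
  choose last hlast hlast' using hl
  choose first hfirst hfirst' using hf
  refine ⟨first, last, ?_, ?_⟩
  · intro x t
    exact ⟨fun h => ⟨hfirst' x t h, hlast' x t h⟩,
      fun h => h3 x _ _ _ h.1 h.2 (hfirst x) (hlast x)⟩
  · intro x y hxy
    obtain ⟨t, hx, hy⟩ := h2 x y hxy
    exact (hfirst' x t hx).trans (hlast' y t hy)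

theorem chrom_eq_not {W : Type*} {G : SimpleGraph W} {S : Set W} {k : ℕ} (hk : 1 ≤ k)
    (h : chrom G S = k) : ¬ (G.induce S).Colorable (k - 1) := by
  intro hc
  have : chrom G S ≤ k - 1 := Nat.sInf_le hc
  omega

theorem chrom_eq_of {W : Type*} {G : SimpleGraph W} {S : Set W} {k : ℕ}
    (h : (G.induce S).Colorable k) (h' : ¬ (G.induce S).Colorable (k - 1)) :
    chrom G S = k := by
  have h1 : chrom G S ≤ k := Nat.sInf_le h
  have h2 : (G.induce S).Colorable (chrom G S) :=
    Nat.sInf_mem (s := {k | (G.induce S).Colorable k}) ⟨k, h⟩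
  by_contra hne
  exact h' (h2.mono (by omega))

theorem pathChromatic_spec {W : Type*} {G : SimpleGraph W} {k : ℕ} (hk : 1 ≤ k)
    (h : pathChromatic G = k) : ∃ (s : ℕ) (B : Fin s → Set W), IsPathDecomp G B ∧
    ∀ t, (G.induce (B t)).Colorable k := by
  have := Nat.sInf_mem (Nat.nonempty_of_pos_sInf (s := {k | ∃ (s : ℕ) (B : Fin s → Set W),
    IsPathDecomp G B ∧ ∀ t, (G.induce (B t)).Colorable k}) (by
      change 0 < pathChromatic G; omega))
  change pathChromatic G ∈ _ at this
  rw [h] at this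
  exact this

/-- The main direction: a `k`-colourable decomposition of `R_m(G)` gives a special enumeration. -/
theorem special_of_decomp [Fintype V] (G : SimpleGraph V) {n k m : ℕ}
    (hn : Fintype.card V = n) (hk : 2 ≤ k)
    (hG : pathChromatic G = k) (hm : n + k + 2 ≤ m) {s : ℕ} {B : Fin s → Set (Fin m × Option V)}
    (hB : IsPathDecomp (Rm G m) B) (hc : ∀ t, ((Rm G m).induce (B t)).Colorable k) :
    ∃ σ : Fin n ≃ V, IsSpecial G σ := by
  classical
  obtain ⟨first, last, hmem, hadj⟩ := exists_first_last hB
  have : Nonempty (Fin m) := ⟨⟨0, by omega⟩⟩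
  have hi : ∀ v : V, ∃ i : Fin m, ∀ j, last (i, some v) ≤ last (j, some v) := fun v =>
    Finite.exists_min fun j => last (j, some v)
  choose ι hι using hi
  set e : V → Fin s := fun v => last (ι v, some v) with he
  let τ : Fin n ≃ V := (Fintype.equivFinOfCardEq hn).symm
  let σ : Fin n ≃ V := (Tuple.sort (e ∘ τ)).trans τ
  have hσ : Monotone (fun i => e (σ i)) := Tuple.monotone_sort (e ∘ τ)
  -- the good indices
  let J : Fin n → Finset (Fin m) := fun ℓ =>
    Finset.univ \ (Finset.Iic ℓ).image (fun a => ι (σ a))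
  have hJmem : ∀ ℓ a, a ≤ ℓ → ∀ j ∈ J ℓ, j ≠ ι (σ a) := by
    intro ℓ a ha j hj h
    simp only [J, Finset.mem_sdiff, Finset.mem_univ, true_and, Finset.mem_image,
      Finset.mem_Iic, not_exists, not_and] at hj
    exact hj a ha h.symm
  have hJcard : ∀ ℓ : Fin n, m ≤ (J ℓ).card + (ℓ + 1) := by
    intro ℓ
    have h1 : ((Finset.Iic ℓ).image (fun a => ι (σ a))).card ≤ (ℓ : ℕ) + 1 := by
      refine Finset.card_image_le.trans ?_
      simp
    have h2 := Finset.le_card_sdiff ((Finset.Iic ℓ).image (fun a => ι (σ a)))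
      (Finset.univ : Finset (Fin m))
    simp only [Finset.card_univ, Fintype.card_fin] at h2
    change m ≤ (Finset.univ \ (Finset.Iic ℓ).image (fun a => ι (σ a))).card + _
    omega
  -- placing copies in bags
  have hput : ∀ ℓ a b : Fin n, a ≤ ℓ → ℓ ≤ b → G.Adj (σ a) (σ b) → ∀ j ∈ J ℓ,
      (j, some (σ b)) ∈ B (e (σ ℓ)) := by
    intro ℓ a b ha hb hab j hj
    rw [hmem]
    constructor
    · exact (hadj (j, some (σ b)) (ι (σ a), some (σ a))
        (rm_adj_some.2 ⟨hJmem ℓ a ha j hj, hab.symm⟩)).trans (hσ ha)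
    · exact (hσ hb).trans (hι _ _)
  have hself : ∀ ℓ, (ι (σ ℓ), some (σ ℓ)) ∈ B (e (σ ℓ)) := by
    intro ℓ
    rw [hmem]
    refine ⟨?_, le_rfl⟩
    obtain ⟨t, ht⟩ := hB.1 (ι (σ ℓ), some (σ ℓ))
    rw [hmem] at ht
    exact ht.1.trans ht.2
  have hcolk : ∀ ℓ, (G.induce (bagX G σ ℓ)).Colorable k := by
    intro ℓ
    obtain ⟨f, hf, hp⟩ := (col_iff _ _ _).1 (hc (e (σ ℓ)))
    have hJk : k + 1 ≤ (J ℓ).card := by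
      have := hJcard ℓ
      have := ℓ.2
      omega
    have hcop : ∀ w ∈ bagX G σ ℓ, w ≠ σ ℓ → ∀ j ∈ J ℓ, (j, some w) ∈ B (e (σ ℓ)) := by
      intro w hw hne j hj
      obtain ⟨b, rfl⟩ := σ.surjective w
      obtain ⟨h1, rfl | ⟨a, ha, hab⟩⟩ := (mem_bagX G σ ℓ b).1 hw
      · exact absurd rfl hne
      · exact hput ℓ a b ha h1 hab j hj
    have key : ∀ w, ∃ c, w ∈ bagX G σ ℓ → w ≠ σ ℓ → ∃ j₁ ∈ J ℓ, ∃ j₂ ∈ J ℓ, j₁ ≠ j₂ ∧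
        f (j₁, some w) = f (j₂, some w) ∧ c = f (j₁, some w) := by
      intro w
      by_cases hw : w ∈ bagX G σ ℓ ∧ w ≠ σ ℓ
      · obtain ⟨j₁, h1, j₂, h2, hj, he⟩ := exists_rep hJk (fun j => f (j, some w))
          (fun j hj => hf _ (hcop w hw.1 hw.2 j hj))
        exact ⟨_, fun _ _ => ⟨j₁, h1, j₂, h2, hj, he, rfl⟩⟩
      · exact ⟨0, fun h h' => absurd ⟨h, h'⟩ hw⟩
    choose g hg using key
    rw [col_iff]
    refine ⟨fun w => if w = σ ℓ then f (ι (σ ℓ), some (σ ℓ)) else g w, ?_, ?_⟩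
    · intro w hw
      dsimp only
      split_ifs with h
      · exact hf _ (hself ℓ)
      · obtain ⟨j₁, h1, j₂, h2, hj, he, hgc⟩ := hg w hw h
        rw [hgc]
        exact hf _ (hcop w hw h j₁ h1)
    · intro u hu v hv huv
      dsimp only
      split_ifs with h h' h'
      · subst h h'; exact absurd huv (G.loopless.irrefl _)
      · obtain ⟨j₁, h1, j₂, h2, hj, he, hgc⟩ := hg v hv h'
        rw [hgc]
        subst h
        exact (rep_ne hp huv.symm hj (hcop v hv h' _ h1) (hcop v hv h' _ h2) (hself ℓ) he).symm
      · obtain ⟨j₁, h1, j₂, h2, hj, he, hgc⟩ := hg u hu h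
        rw [hgc]
        subst h'
        exact rep_ne hp huv hj (hcop u hu h _ h1) (hcop u hu h _ h2) (hself ℓ) he
      · obtain ⟨j₁, h1, j₂, h2, hj, he, hgc⟩ := hg u hu h
        obtain ⟨i₁, h1', i₂, h2', hj', he', hgc'⟩ := hg v hv h'
        rw [hgc, hgc']
        exact rep_ne hp huv hj (hcop u hu h _ h1) (hcop u hu h _ h2) (hcop v hv h' _ h1') he
  refine ⟨σ, ?_, ?_⟩
  · apply le_antisymm
    · rw [hG]
      exact Nat.sInf_le hcolk
    · have hne : {k | ∀ ℓ, (G.induce (bagX G σ ℓ)).Colorable k}.Nonempty := ⟨k, hcolk⟩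
      exact Nat.sInf_le ⟨n, bagX G σ, bagX_decomp G σ, Nat.sInf_mem hne⟩
  · intro ℓ hℓ a ha hab
    rw [hG] at hℓ
    have hnot := chrom_eq_not (by omega) hℓ
    have hsize : k + ℓ ≤ n := by
      by_contra hlt
      apply hnot
      rw [col_iff]
      refine ⟨fun w => (σ.symm w : ℕ) - ℓ, ?_, ?_⟩
      · intro w hw
        obtain ⟨b, rfl⟩ := σ.surjective w
        have h1 := ((mem_bagX G σ ℓ b).1 hw).1
        have h2 := b.2
        have h3 := ℓ.2
        rw [Fin.le_def] at h1
        simp only [Equiv.symm_apply_apply]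
        omega
      · intro u hu v hv huv
        obtain ⟨b, rfl⟩ := σ.surjective u
        obtain ⟨c, rfl⟩ := σ.surjective v
        have h1 := ((mem_bagX G σ ℓ b).1 hu).1
        have h2 := ((mem_bagX G σ ℓ c).1 hv).1
        have h3 : b ≠ c := fun h => G.ne_of_adj huv (congrArg σ h)
        rw [Fin.le_def] at h1 h2
        have h4 : (b : ℕ) ≠ c := fun h => h3 (Fin.ext h)
        simp only [Equiv.symm_apply_apply]
        omega
    have hJ2 : 2 * k + 1 ≤ (J ℓ).card := by
      have := hJcard ℓ
      omega
    set t := e (σ ℓ) with ht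
    have hall : ∀ j ∈ J ℓ, ∀ w ∈ bagX G σ ℓ, (j, some w) ∈ B t := by
      intro j hj w hw
      obtain ⟨b, rfl⟩ := σ.surjective w
      obtain ⟨h1, rfl | ⟨a', ha', hab'⟩⟩ := (mem_bagX G σ ℓ b).1 hw
      · exact hput _ a _ ha.le le_rfl hab j hj
      · exact hput ℓ a' b ha' h1 hab' j hj
    have hout : ∀ j ∈ J ℓ, last (j, none) < t ∨ t < first (j, none) := by
      intro j hj
      by_contra hcon
      push Not at hcon
      exact hnot (key_claim (hc t) (by omega) hall hj ((hmem _ _).2 ⟨hcon.2, hcon.1⟩))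
    have hfl : ∀ x, first x ≤ last x := by
      intro x
      obtain ⟨t, ht⟩ := hB.1 x
      rw [hmem] at ht
      exact ht.1.trans ht.2
    let J1 := (J ℓ).filter fun j => last (j, none) < t
    let J2 := (J ℓ).filter fun j => ¬ last (j, none) < t
    have hsum : J1.card + J2.card = (J ℓ).card := Finset.card_filter_add_card_filter_not _
    rcases (by omega : k + 1 ≤ J1.card ∨ k + 1 ≤ J2.card) with h | h
    · obtain ⟨j₀, hj₀, hmax⟩ := Finset.exists_max_image J1 (fun j => last (j, none))
        (Finset.card_pos.1 (by omega))
      have hj₀' := (Finset.mem_filter.1 hj₀).2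
      refine hnot (key_claim (hc (last (j₀, none))) h ?_ hj₀ ((hmem _ _).2 ⟨hfl _, le_rfl⟩))
      intro j hj w hw
      have h1 := (hmem _ _).1 (hall j (Finset.mem_filter.1 hj).1 w hw)
      refine (hmem _ _).2 ⟨?_, hj₀'.le.trans h1.2⟩
      exact (hadj _ _ (rm_adj_none j w).symm).trans (hmax j hj)
    · obtain ⟨j₀, hj₀, hmin⟩ := Finset.exists_min_image J2 (fun j => first (j, none))
        (Finset.card_pos.1 (by omega))
      have hj₀' := Finset.mem_filter.1 hj₀
      have hlt := (hout j₀ hj₀'.1).resolve_left hj₀'.2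
      refine hnot (key_claim (hc (first (j₀, none))) h ?_ hj₀ ((hmem _ _).2 ⟨le_rfl, hfl _⟩))
      intro j hj w hw
      have h1 := (hmem _ _).1 (hall j (Finset.mem_filter.1 hj).1 w hw)
      refine (hmem _ _).2 ⟨h1.1.trans hlt.le, ?_⟩
      exact (hmin j hj).trans (hadj _ _ (rm_adj_none j w))

/-- `χ_P(R_m(G)) ≤ k + 1`. -/
theorem decomp_succ [Fintype V] (G : SimpleGraph V) {n k m : ℕ}
    (hn : Fintype.card V = n) (hn1 : 1 ≤ n) {s : ℕ} {B : Fin s → Set V}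
    (hB : IsPathDecomp G B) (hc : ∀ t, (G.induce (B t)).Colorable k) :
    ∃ (s : ℕ) (B : Fin s → Set (Fin m × Option V)), IsPathDecomp (Rm G m) B ∧
    ∀ t, ((Rm G m).induce (B t)).Colorable (k + 1) := by
  have hV : Nonempty V := Fintype.card_pos_iff.1 (by omega)
  obtain ⟨v₀⟩ := hV
  refine ⟨s, fun t => {p | ∀ w, p.2 = some w → w ∈ B t}, ⟨?_, ?_, ?_⟩, ?_⟩
  · rintro ⟨i, _ | v⟩
    · obtain ⟨t, -⟩ := hB.1 v₀
      exact ⟨t, by simp⟩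
    · obtain ⟨t, ht⟩ := hB.1 v
      exact ⟨t, by simpa using ht⟩
  · rintro ⟨i, _ | u⟩ ⟨j, _ | v⟩ h
    · exact absurd h rm_adj_none_none
    · obtain ⟨t, ht⟩ := hB.1 v
      exact ⟨t, by simp, by simpa using ht⟩
    · obtain ⟨t, ht⟩ := hB.1 u
      exact ⟨t, by simpa using ht, by simp⟩
    · obtain ⟨t, hu, hv⟩ := hB.2.1 u v (rm_adj_some.1 h).2
      exact ⟨t, by simpa using hu, by simpa using hv⟩
  · intro p t₁ t₂ t₃ h12 h23 h1 h3 w hw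
    exact hB.2.2 w t₁ t₂ t₃ h12 h23 (h1 w hw) (h3 w hw)
  · intro t
    obtain ⟨f, hf, hp⟩ := (col_iff _ _ _).1 (hc t)
    rw [col_iff]
    refine ⟨fun p => p.2.elim k f, ?_, ?_⟩
    · rintro ⟨i, _ | v⟩ h
      · simp
      · have := hf v (h v rfl)
        simp; omega
    · rintro ⟨i, _ | u⟩ hu ⟨j, _ | v⟩ hv h
      · exact absurd h rm_adj_none_none
      · have := hf v (hv v rfl)
        simp; omega
      · have := hf u (hu u rfl)
        simp; omega
      · exact hp u (hu u rfl) v (hv v rfl) (rm_adj_some.1 h).2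

/-- `χ_P(R_m(G)) ≥ χ_P(G)` when `m ≥ n`. -/
theorem decomp_restrict [Fintype V] (G : SimpleGraph V) {n k m : ℕ}
    (hn : Fintype.card V = n) (hm : n ≤ m) {s : ℕ} {B : Fin s → Set (Fin m × Option V)}
    (hB : IsPathDecomp (Rm G m) B) (hc : ∀ t, ((Rm G m).induce (B t)).Colorable k) :
    pathChromatic G ≤ k := by
  let τ : V ≃ Fin n := Fintype.equivFinOfCardEq hn
  let φ : V → Fin m × Option V := fun v => (Fin.castLE hm (τ v), some v)
  have hφ : ∀ u v, G.Adj u v → (Rm G m).Adj (φ u) (φ v) := by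
    intro u v huv
    refine rm_adj_some.2 ⟨fun h => G.ne_of_adj huv (τ.injective (Fin.castLE_injective hm h)), huv⟩
  refine Nat.sInf_le ⟨s, fun t => φ ⁻¹' B t, ⟨?_, ?_, ?_⟩, ?_⟩
  · exact fun v => hB.1 (φ v)
  · exact fun u v h => hB.2.1 _ _ (hφ u v h)
  · exact fun v => hB.2.2 (φ v)
  · intro t
    obtain ⟨f, hf, hp⟩ := (col_iff _ _ _).1 (hc t)
    rw [col_iff]
    exact ⟨f ∘ φ, fun v hv => hf _ hv, fun u hu v hv h => hp _ hu _ hv (hφ u v h)⟩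

/-- In a special enumeration, deleting `v_ℓ` from `X_ℓ` leaves a `(k-1)`-colourable set. -/
theorem special_boundary (G : SimpleGraph V) {n k : ℕ} (σ : Fin n ≃ V)
    (hbad : ∀ i, ¬ (G.induce (bagX G σ i)).Colorable (k - 1) →
      ∀ j, j < i → ¬ G.Adj (σ j) (σ i)) (d : ℕ) :
    ∀ ℓ : Fin n, n ≤ ℓ + 1 + d → (G.induce (bagX G σ ℓ \ {σ ℓ})).Colorable (k - 1) := by
  have empt : ∀ ℓ : Fin n, n ≤ ℓ + 1 → (G.induce (bagX G σ ℓ \ {σ ℓ})).Colorable (k - 1) := by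
    intro ℓ hℓ
    have hno : ∀ w, w ∉ bagX G σ ℓ \ {σ ℓ} := by
      rintro w ⟨hw, hne⟩
      obtain ⟨b, rfl⟩ := σ.surjective w
      have h1 := ((mem_bagX G σ ℓ b).1 hw).1
      apply hne
      have : b = ℓ := by
        rw [Fin.le_def] at h1
        apply Fin.ext
        have := b.2
        omega
      rw [this]; rfl
    rw [col_iff]
    exact ⟨fun _ => 0, fun v hv => absurd hv (hno v), fun v hv => absurd hv (hno v)⟩
  induction d with
  | zero => exact fun ℓ h => empt ℓ (by omega)
  | succ d ih =>
    intro ℓ hℓ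
    by_cases hlast : n ≤ ℓ + 1
    · exact empt ℓ hlast
    let p : Fin n := ⟨ℓ + 1, by omega⟩
    have hp := ih p (by simp only [p]; omega)
    have hlp : ℓ < p := by rw [Fin.lt_def]; simp only [p]; omega
    have hsub : bagX G σ ℓ \ {σ ℓ} ⊆ bagX G σ p := by
      rintro w ⟨hw, hne⟩
      obtain ⟨b, rfl⟩ := σ.surjective w
      obtain ⟨h1, rfl | ⟨a, ha, hab⟩⟩ := (mem_bagX G σ ℓ b).1 hw
      · exact absurd rfl hne
      · refine (mem_bagX G σ p b).2 ⟨?_, Or.inr ⟨a, ha.trans hlp.le, hab⟩⟩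
        have : b ≠ ℓ := fun h => hne (by rw [h]; rfl)
        have h2 : (b : ℕ) ≠ ℓ := fun h => this (Fin.ext h)
        rw [Fin.le_def] at h1 ⊢
        simp only [p]; omega
    by_cases hgood : (G.induce (bagX G σ p)).Colorable (k - 1)
    · exact col_mono G hsub le_rfl hgood
    · have hsub' : bagX G σ ℓ \ {σ ℓ} ⊆ bagX G σ p \ {σ p} := by
        intro w hw
        refine ⟨hsub hw, ?_⟩
        intro hwp
        have hwp' : w = σ p := hwp
        subst hwp'
        obtain ⟨h1, h2 | ⟨a, ha, hab⟩⟩ := (mem_bagX G σ ℓ p).1 hw.1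
        · exact absurd h2 hlp.ne'
        · exact hbad p hgood a (ha.trans_lt hlp) hab
      exact col_mono G hsub' le_rfl hp

/-- A special enumeration gives a `k`-colourable decomposition of `R_m(G)`. -/
theorem decomp_of_special (G : SimpleGraph V) {n k m : ℕ} (hn1 : 1 ≤ n) (hm : 1 ≤ m)
    (hk : 2 ≤ k) (σ : Fin n ≃ V) (hcol : ∀ ℓ, (G.induce (bagX G σ ℓ)).Colorable k)
    (hbad : ∀ i, ¬ (G.induce (bagX G σ i)).Colorable (k - 1) →
      ∀ j, j < i → ¬ G.Adj (σ j) (σ i)) :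
    ∃ (s : ℕ) (B : Fin s → Set (Fin m × Option V)), IsPathDecomp (Rm G m) B ∧
    ∀ t, ((Rm G m).induce (B t)).Colorable k := by
  classical
  let bad : Fin n → Prop := fun ℓ => ¬ (G.induce (bagX G σ ℓ)).Colorable (k - 1)
  have hX := bagX_decomp G σ
  let B : Fin (n * m) → Set (Fin m × Option V) := fun t =>
    {p | ∀ w, p.2 = some w → w ∈ bagX G σ t.divNat ∧
      (bad t.divNat → w = σ t.divNat → p.1 = t.modNat)}
  have hBn : ∀ t i, ((i, none) : Fin m × Option V) ∈ B t := fun t i w h => by simp at h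
  have hBs : ∀ t i w, ((i, some w) : Fin m × Option V) ∈ B t ↔ w ∈ bagX G σ t.divNat ∧
      (bad t.divNat → w = σ t.divNat → i = t.modNat) := by
    intro t i w
    simp [B]
  have hT : ∀ (ℓ : Fin n) (i : Fin m), ∃ t : Fin (n * m), t.divNat = ℓ ∧ t.modNat = i := by
    intro ℓ i
    refine ⟨finProdFinEquiv (ℓ, i), ?_, ?_⟩
    · exact congrArg Prod.fst (finProdFinEquiv.symm_apply_apply (ℓ, i))
    · exact congrArg Prod.snd (finProdFinEquiv.symm_apply_apply (ℓ, i))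
  have hinj : ∀ t t' : Fin (n * m), t.divNat = t'.divNat → t.modNat = t'.modNat → t = t' := by
    intro t t' h1 h2
    exact finProdFinEquiv.symm.injective (Prod.ext h1 h2)
  have hmono : ∀ t t' : Fin (n * m), t ≤ t' → t.divNat ≤ t'.divNat := by
    intro t t' h
    exact Nat.div_le_div_right h
  have hcov : ∀ (i : Fin m) (v : V), ∃ t, ((i, some v) : Fin m × Option V) ∈ B t := by
    intro i v
    obtain ⟨ℓ, hℓ⟩ := hX.1 v
    obtain ⟨t, rfl, rfl⟩ := hT ℓ i
    exact ⟨t, (hBs _ _ _).2 ⟨hℓ, fun _ _ => rfl⟩⟩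
  have hedge : ∀ (i j : Fin m) (a b : Fin n), a < b → G.Adj (σ a) (σ b) →
      ∃ t, ((i, some (σ a)) : Fin m × Option V) ∈ B t ∧ (j, some (σ b)) ∈ B t := by
    intro i j a b hab h
    obtain ⟨t, rfl, rfl⟩ := hT a i
    refine ⟨t, (hBs _ _ _).2 ⟨(mem_bagX _ _ _ _).2 ⟨le_rfl, Or.inl rfl⟩, fun _ _ => rfl⟩,
      (hBs _ _ _).2 ⟨(mem_bagX _ _ _ _).2 ⟨hab.le, Or.inr ⟨_, le_rfl, h⟩⟩, fun _ he => ?_⟩⟩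
    exact absurd (σ.injective he) hab.ne'
  refine ⟨n * m, B, ⟨?_, ?_, ?_⟩, ?_⟩
  · rintro ⟨i, _ | v⟩
    · exact ⟨⟨0, Nat.mul_pos hn1 hm⟩, hBn _ _⟩
    · exact hcov i v
  · rintro ⟨i, _ | u⟩ ⟨j, _ | v⟩ h
    · exact absurd h rm_adj_none_none
    · obtain ⟨t, ht⟩ := hcov j v
      exact ⟨t, hBn _ _, ht⟩
    · obtain ⟨t, ht⟩ := hcov i u
      exact ⟨t, ht, hBn _ _⟩
    · obtain ⟨-, h⟩ := rm_adj_some.1 h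
      obtain ⟨a, rfl⟩ := σ.surjective u
      obtain ⟨b, rfl⟩ := σ.surjective v
      have hne : a ≠ b := fun h' => G.ne_of_adj h (congrArg σ h')
      rcases lt_or_gt_of_ne hne with hlt | hlt
      · exact hedge i j a b hlt h
      · obtain ⟨t, h1, h2⟩ := hedge j i b a hlt h.symm
        exact ⟨t, h2, h1⟩
  · rintro ⟨i, _ | v⟩ t₁ t₂ t₃ h12 h23 h1 h3
    · exact hBn _ _
    · rw [hBs] at h1 h3 ⊢
      have d12 := hmono _ _ h12
      have d23 := hmono _ _ h23
      refine ⟨hX.2.2 v _ _ _ d12 d23 h1.1 h3.1, ?_⟩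
      intro hb hv
      subst hv
      have e1 : t₂.divNat = t₁.divNat := by
        obtain ⟨g1, g2 | ⟨a, ha, hab⟩⟩ := (mem_bagX _ _ _ _).1 h1.1
        · exact g2
        · rcases g1.eq_or_lt with g | g
          · exact g.symm
          · exact absurd hab (hbad _ hb a (ha.trans_lt g))
      have e3 : t₂.divNat = t₃.divNat := le_antisymm d23 ((mem_bagX _ _ _ _).1 h3.1).1
      have m1 : i = t₁.modNat := h1.2 (e1 ▸ hb) (by rw [e1])
      have m3 : i = t₃.modNat := h3.2 (e3 ▸ hb) (by rw [e3])
      have h13 : t₁ = t₃ := hinj _ _ (e1.symm.trans e3) (m1.symm.trans m3)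
      have : t₂ = t₁ := le_antisymm (h13 ▸ h23) h12
      rw [this]; exact m1
  · intro t
    by_cases hb : bad t.divNat
    · obtain ⟨f, hf, hp⟩ := (col_iff _ _ _).1
        (special_boundary G σ hbad n t.divNat (by omega))
      set ℓ := t.divNat with hℓ
      rw [col_iff]
      -- colour `k - 1` is the extra colour
      refine ⟨fun p => p.2.elim (if p.1 = t.modNat then 0 else k - 1)
        (fun w => if p.1 = t.modNat then k - 1 else f w), ?_, ?_⟩
      · rintro ⟨i, _ | v⟩ h
        · dsimp only [Option.elim]; split_ifs <;> omega
        · dsimp only [Option.elim]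
          split_ifs with h'
          · omega
          · have h2 := (hBs _ _ _).1 h
            have := hf v ⟨h2.1, fun he => h' (h2.2 hb he)⟩
            omega
      · have hsm : ∀ (i : Fin m) (v : V), ((i, some v) : Fin m × Option V) ∈ B t →
            i ≠ t.modNat → v ∈ bagX G σ ℓ \ {σ ℓ} := by
          intro i v h h'
          have h2 := (hBs _ _ _).1 h
          exact ⟨h2.1, fun he => h' (h2.2 hb he)⟩
        rintro ⟨i, _ | u⟩ hu ⟨j, _ | v⟩ hv h
        · exact absurd h rm_adj_none_none
        · have hij := rm_adj_none_some.1 h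
          subst hij
          dsimp only [Option.elim]
          split_ifs with h'
          · omega
          · have := hf v (hsm _ _ hv h')
            omega
        · have hij := rm_adj_none_some.1 h.symm
          subst hij
          dsimp only [Option.elim]
          split_ifs with h'
          · omega
          · have := hf u (hsm _ _ hu h')
            omega
        · obtain ⟨hij, huv⟩ := rm_adj_some.1 h
          dsimp only [Option.elim]
          split_ifs with h1 h2 h2
          · exact absurd (h1.trans h2.symm) hij
          · have := hf v (hsm _ _ hv h2)
            omega
          · have := hf u (hsm _ _ hu h1)
            omega
          · exact hp u (hsm _ _ hu h1) v (hsm _ _ hv h2) huv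
    · obtain ⟨f, hf, hp⟩ := (col_iff _ _ _).1 (not_not.1 hb)
      rw [col_iff]
      refine ⟨fun p => p.2.elim (k - 1) f, ?_, ?_⟩
      · rintro ⟨i, _ | v⟩ h
        · dsimp only [Option.elim]; omega
        · have := hf v ((hBs _ _ _).1 h).1
          dsimp only [Option.elim]; omega
      · rintro ⟨i, _ | u⟩ hu ⟨j, _ | v⟩ hv h
        · exact absurd h rm_adj_none_none
        · have := hf v ((hBs _ _ _).1 hv).1
          dsimp only [Option.elim]; omega
        · have := hf u ((hBs _ _ _).1 hu).1
          dsimp only [Option.elim]; omega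
        · exact hp u ((hBs _ _ _).1 hu).1 v ((hBs _ _ _).1 hv).1 (rm_adj_some.1 h).2

/-- Theorem 2: for `k ≥ 2`, `m ≥ n + k + 2` and `G` with `χ_P(G) = k`, `|V(G)| = n`:
`χ_P(R_m(G)) = k` if `G` has a special enumeration, and `χ_P(R_m(G)) = k + 1` otherwise. -/
theorem stmt_10 {V : Type u} [Fintype V] (G : SimpleGraph V) {n k m : ℕ}
    (hn : Fintype.card V = n) (hn1 : 1 ≤ n) (hk : 2 ≤ k)
    (hG : pathChromatic G = k) (hm : n + k + 2 ≤ m) :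
    ((∃ σ : Fin n ≃ V, IsSpecial G σ) → pathChromatic (Rm G m) = k) ∧
    ((¬ ∃ σ : Fin n ≃ V, IsSpecial G σ) → pathChromatic (Rm G m) = k + 1) := by
  obtain ⟨s, B, hB, hc⟩ := pathChromatic_spec (by omega) hG
  have hub : pathChromatic (Rm G m) ≤ k + 1 := Nat.sInf_le (decomp_succ G hn hn1 hB hc)
  obtain ⟨s', B', hB', hc'⟩ : ∃ (s : ℕ) (B : Fin s → Set (Fin m × Option V)),
      IsPathDecomp (Rm G m) B ∧ ∀ t, ((Rm G m).induce (B t)).Colorable (pathChromatic (Rm G m)) :=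
    Nat.sInf_mem (s := {k | ∃ (s : ℕ) (B : Fin s → Set (Fin m × Option V)),
      IsPathDecomp (Rm G m) B ∧ ∀ t, ((Rm G m).induce (B t)).Colorable k})
      ⟨k + 1, decomp_succ G hn hn1 hB hc⟩
  constructor
  · rintro ⟨σ, hσ, hs⟩
    have hlb := decomp_restrict G hn (by omega) hB' hc'
    rw [hG] at hσ hs hlb
    have hcol : ∀ ℓ, (G.induce (bagX G σ ℓ)).Colorable k := by
      have := Nat.sInf_mem (Nat.nonempty_of_pos_sInf
        (s := {k | ∀ ℓ, (G.induce (bagX G σ ℓ)).Colorable k}) (by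
          change 0 < decompChrom G σ; omega))
      change decompChrom G σ ∈ _ at this
      rw [hσ] at this
      exact this
    have hle : pathChromatic (Rm G m) ≤ k := Nat.sInf_le
      (decomp_of_special G hn1 (by omega) hk σ hcol
        (fun i hi => hs i (chrom_eq_of (hcol i) hi)))
    omega
  · intro hno
    by_contra hne
    exact hno (special_of_decomp G hn hk hG hm hB' (fun t => (hc' t).mono (by omega)))
end

section
/- Let G be a graph with χ_P(G) = k and |V(G)| = n. For all integers m ≥ n+k+2 and ℓ ≥ m(n+1)+k+3, the path-chromatic number of R_ℓ(R_m(G)) is strictly greater than k. -/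
open SimpleGraph

universe u
variable {V : Type u}

/-! ### Colourings on a vertex set, bags of a layout -/

/-- `X` can be properly coloured with the colours `0, …, c-1`. -/
def ColOn {W : Type*} (G : SimpleGraph W) (X : Set W) (c : ℕ) : Prop :=
  ∃ φ : W → ℕ, (∀ x ∈ X, φ x < c) ∧ ∀ x ∈ X, ∀ y ∈ X, G.Adj x y → φ x ≠ φ y

lemma colOn_iff {W : Type*} (G : SimpleGraph W) (X : Set W) (c : ℕ) :
    ColOn G X c ↔ (G.induce X).Colorable c := by
  classical
  constructor
  · rintro ⟨φ, h1, h2⟩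
    exact ⟨SimpleGraph.Coloring.mk (fun x => (⟨φ x, h1 x x.2⟩ : Fin c)) (by
      intro x y hxy h
      exact h2 x x.2 y y.2 hxy (by simpa using h))⟩
  · rintro ⟨C⟩
    refine ⟨fun x => if h : x ∈ X then (C ⟨x, h⟩ : ℕ) else 0, ?_, ?_⟩
    · intro x hx
      simp [hx]
    · intro x hx y hy hxy
      simp only [hx, hy, dif_pos]
      intro h
      exact C.valid (v := ⟨x, hx⟩) (w := ⟨y, hy⟩) hxy (Fin.ext h)

lemma ColOn.mono {W : Type*} {G : SimpleGraph W} {X Y : Set W} {c : ℕ}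
    (h : ColOn G X c) (hYX : Y ⊆ X) : ColOn G Y c := by
  obtain ⟨φ, h1, h2⟩ := h
  exact ⟨φ, fun x hx => h1 x (hYX hx), fun x hx y hy => h2 x (hYX hx) y (hYX hy)⟩

/-- The bag when `x` is removed and `Q` has been removed before. -/
def bg {W : Type*} (G : SimpleGraph W) (Q : Set W) (x : W) : Set W :=
  {y | y ∉ Q ∧ (y = x ∨ G.Adj x y ∨ ∃ z ∈ Q, G.Adj z y)}

/-- The bag of `x` in the layout given by the time function `f`. -/
def lb {W : Type*} (G : SimpleGraph W) (f : W → ℕ) (x : W) : Set W :=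
  bg G {u | f u < f x} x

lemma mem_lb_self {W : Type*} (G : SimpleGraph W) (f : W → ℕ) (x : W) : x ∈ lb G f x := by
  simp [lb, bg]

lemma mem_lb_of_adj {W : Type*} {G : SimpleGraph W} {f : W → ℕ} (hf : Function.Injective f)
    {x y z : W} (hy : f x ≤ f y) (hz : f z ≤ f x) (h : G.Adj z y) : y ∈ lb G f x := by
  refine ⟨by simpa using hy, ?_⟩
  rcases hz.lt_or_eq with h1 | h1
  · exact Or.inr (Or.inr ⟨z, h1, h⟩)
  · have := hf h1
    subst this
    exact Or.inr (Or.inl h)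

/-- `G` has a path-decomposition all of whose bags are `c`-colourable. -/
def HasPD {W : Type*} (G : SimpleGraph W) (c : ℕ) : Prop :=
  ∃ (s : ℕ) (B : Fin s → Set W), IsPathDecomp G B ∧ ∀ t, ColOn G (B t) c

lemma HasPD.comap {W W' : Type*} {G : SimpleGraph W} {G' : SimpleGraph W'} {c : ℕ}
    (h : HasPD G c) (g : W' → W) (hg : ∀ u v, G'.Adj u v → G.Adj (g u) (g v)) : HasPD G' c := by
  obtain ⟨s, B, ⟨h1, h2, h3⟩, h4⟩ := h
  refine ⟨s, fun t => g ⁻¹' B t, ⟨fun v => h1 (g v), fun u v huv => h2 _ _ (hg u v huv),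
    fun v => h3 (g v)⟩, fun t => ?_⟩
  obtain ⟨φ, p1, p2⟩ := h4 t
  exact ⟨fun x => φ (g x), fun x hx => p1 _ hx, fun x hx y hy hxy => p2 _ hx _ hy (hg _ _ hxy)⟩

/-- A path-decomposition yields a layout. -/
lemma HasPD.layout {W : Type*} [Fintype W] {G : SimpleGraph W} {c : ℕ} (h : HasPD G c) :
    ∃ f : W → ℕ, Function.Injective f ∧ ∀ x, ColOn G (lb G f x) c := by
  classical
  obtain ⟨s, B, ⟨h1, h2, h3⟩, h4⟩ := h
  have hr : ∀ v, ∃ t, v ∈ B t ∧ ∀ t', v ∈ B t' → t' ≤ t := by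
    intro v
    obtain ⟨t, ht, hm⟩ := (Finset.univ.filter (fun t => v ∈ B t)).exists_max_image id
      (by obtain ⟨t, ht⟩ := h1 v; exact ⟨t, by simpa using ht⟩)
    exact ⟨t, by simpa using ht, fun t' ht' => hm t' (by simpa using ht')⟩
  choose r hr1 hr2 using hr
  let e := Fintype.equivFin W
  have hlt : ∀ v, (e v : ℕ) < Fintype.card W := fun v => (e v).2
  have key : ∀ u v, r u < r v →
      (r u : ℕ) * Fintype.card W + e u < (r v : ℕ) * Fintype.card W + e v := by
    intro u v huv
    have : (r u : ℕ) + 1 ≤ r v := huv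
    have h5 := Nat.mul_le_mul_right (Fintype.card W) this
    have := hlt u
    nlinarith
  have key' : ∀ u v, (r u : ℕ) * Fintype.card W + e u ≤ (r v : ℕ) * Fintype.card W + e v →
      r u ≤ r v := by
    intro u v huv
    by_contra hcon
    have := key v u (not_le.mp hcon)
    omega
  refine ⟨fun v => (r v : ℕ) * Fintype.card W + e v, ?_, ?_⟩
  · intro u v huv
    have huv' : (r u : ℕ) * Fintype.card W + e u = (r v : ℕ) * Fintype.card W + e v := huv
    have : r u = r v := le_antisymm (key' _ _ huv'.le) (key' _ _ huv'.ge)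
    rw [this] at huv'
    exact e.injective (Fin.ext (by omega))
  · intro x
    refine (h4 (r x)).mono ?_
    have main : ∀ z y, r z ≤ r x → r x ≤ r y → G.Adj z y → y ∈ B (r x) := by
      intro z y hz hy hzy
      obtain ⟨t, ht1, ht2⟩ := h2 z y hzy
      exact h3 y t (r x) (r y) ((hr2 z t ht1).trans hz) hy ht2 (hr1 y)
    rintro y ⟨hy, hy'⟩
    have hxy : r x ≤ r y := key' _ _ (by simpa using hy)
    rcases hy' with rfl | h5 | ⟨z, hz, h5⟩
    · exact hr1 y
    · exact main x y le_rfl hxy h5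
    · exact main z y (key' _ _ (le_of_lt hz)) hxy h5

/-- A chain of vertex sets yields a path-decomposition. -/
def Chain {W : Type*} (G : SimpleGraph W) (c : ℕ) (Q : Set W) : Prop :=
  ∃ (s : ℕ) (E : ℕ → Set W), Monotone E ∧ E 0 = ∅ ∧ E s = Q ∧
    ∀ t < s, ColOn G (closedNbhd G (E (t + 1)) \ E t) c

lemma Chain.empty {W : Type*} (G : SimpleGraph W) (c : ℕ) : Chain G c ∅ :=
  ⟨0, fun _ => ∅, monotone_const, rfl, rfl, by simp⟩

lemma Chain.extend {W : Type*} {G : SimpleGraph W} {c : ℕ} {Q Q' : Set W} (h : Chain G c Q)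
    (hQ : Q ⊆ Q') (hc : ColOn G (closedNbhd G Q' \ Q) c) : Chain G c Q' := by
  obtain ⟨s, E, hE, h0, hs, h1⟩ := h
  refine ⟨s + 1, fun t => if t ≤ s then E t else Q', ?_, by simpa using h0, by simp, ?_⟩
  · intro a b hab
    by_cases hb : b ≤ s
    · simpa [hb, hab.trans hb] using hE hab
    · by_cases ha : a ≤ s
      · simp only [ha, hb, if_true, if_false]
        exact (hE ha).trans (hs ▸ hQ)
      · simp [ha, hb]
  · intro t ht
    by_cases hts : t < s
    · have h2 : t + 1 ≤ s := hts
      simpa [h2, hts.le] using h1 t hts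
    · have : t = s := by omega
      subst this
      simpa [hs] using hc

lemma Chain.hasPD {W : Type*} {G : SimpleGraph W} {c : ℕ} (h : Chain G c Set.univ) :
    HasPD G c := by
  classical
  obtain ⟨s, E, hE, h0, hs, h1⟩ := h
  have hex : ∀ v, ∃ t, v ∈ E t := fun v => ⟨s, by simp [hs]⟩
  -- `p v` is the least index whose successor set contains `v`
  have hp : ∀ v, ∃ t < s, v ∈ E (t + 1) ∧ v ∉ E t := by
    intro v
    have h2 := Nat.find_spec (hex v)
    have h3 : Nat.find (hex v) ≤ s := Nat.find_min' _ (by simp [hs])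
    have h4 : Nat.find (hex v) ≠ 0 := by
      intro h
      rw [h, h0] at h2
      exact h2
    obtain ⟨t, ht⟩ := Nat.exists_eq_succ_of_ne_zero h4
    refine ⟨t, by omega, ?_, ?_⟩
    · rw [ht] at h2; exact h2
    · exact Nat.find_min (hex v) (by omega)
  choose p hp1 hp2 hp3 using hp
  have hmem : ∀ v t, v ∈ E (t + 1) → p v ≤ t := by
    intro v t hv
    by_contra hcon
    exact hp3 v (hE (by omega : t + 1 ≤ p v) hv)
  have hnot : ∀ v t, v ∉ E t → t ≤ p v := by
    intro v t hv
    by_contra hcon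
    exact hv (hE (by omega : p v + 1 ≤ t) (hp2 v))
  refine ⟨s, fun t => closedNbhd G (E (t + 1)) \ E t, ⟨?_, ?_, ?_⟩, fun t => h1 t t.2⟩
  · intro v
    exact ⟨⟨p v, hp1 v⟩, Or.inl (hp2 v), hp3 v⟩
  · have main : ∀ u v, G.Adj u v → p u ≤ p v → ∃ t : Fin s,
        u ∈ closedNbhd G (E ((t : ℕ) + 1)) \ E t ∧ v ∈ closedNbhd G (E ((t : ℕ) + 1)) \ E t := by
      intro u v huv hle
      refine ⟨⟨p u, hp1 u⟩, ⟨Or.inl (hp2 u), hp3 u⟩, ⟨Or.inr ⟨u, hp2 u, huv⟩, ?_⟩⟩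
      intro h
      exact hp3 v (hE hle h)
    intro u v huv
    rcases le_total (p u) (p v) with h | h
    · exact main u v huv h
    · obtain ⟨t, h2, h3⟩ := main v u huv.symm h
      exact ⟨t, h3, h2⟩
  · rintro v t₁ t₂ t₃ h12 h23 ⟨hv1, -⟩ ⟨-, hv3⟩
    have h12' : (t₁ : ℕ) + 1 ≤ t₂ + 1 := by have : (t₁ : ℕ) ≤ t₂ := h12; omega
    refine ⟨?_, fun h => hv3 (hE h23 h)⟩
    rcases hv1 with h | ⟨u, hu, huv⟩
    · exact Or.inl (hE h12' h)
    · exact Or.inr ⟨u, hE h12' hu, huv⟩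

/-! ### Special layouts -/

/-- Admissible step of a special layout. -/
def StepOK {W : Type*} (G : SimpleGraph W) (K : ℕ) (Q : Set W) (v : W) : Prop :=
  (∃ u ∈ Q, G.Adj u v) → ColOn G (bg G Q v) K

/-- Sets that are initial segments of special partial layouts. -/
inductive Legit {W : Type*} (G : SimpleGraph W) (K : ℕ) : Set W → Prop
  | empty : Legit G K ∅
  | step (Q : Set W) (v : W) : Legit G K Q → v ∉ Q → StepOK G K Q v → Legit G K (insert v Q)

lemma Legit.layout {W : Type*} {G : SimpleGraph W} {K : ℕ} {Q : Set W} (h : Legit G K Q) :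
    ∃ (f : W → ℕ) (N : ℕ), Set.InjOn f Q ∧ (∀ v ∈ Q, f v < N) ∧
      ∀ v ∈ Q, StepOK G K {u | u ∈ Q ∧ f u < f v} v := by
  classical
  induction h with
  | empty => exact ⟨fun _ => 0, 0, by simp, by simp, by simp⟩
  | step Q v hQ hv hs ih =>
    obtain ⟨f, N, h1, h2, h3⟩ := ih
    have hne : ∀ u ∈ Q, u ≠ v := fun u hu h => hv (h ▸ hu)
    have hup : ∀ u ∈ Q, Function.update f v N u = f u := fun u hu => by simp [hne u hu]
    refine ⟨Function.update f v N, N + 1, ?_, ?_, ?_⟩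
    · rintro a (rfl | ha) b (rfl | hb) hab
      · rfl
      · rw [hup b hb] at hab
        have := h2 b hb
        simp at hab
        omega
      · rw [hup a ha] at hab
        have := h2 a ha
        simp at hab
        omega
      · rw [hup a ha, hup b hb] at hab
        exact h1 ha hb hab
    · rintro a (rfl | ha)
      · simp
      · rw [hup a ha]
        have := h2 a ha
        omega
    · rintro a (rfl | ha)
      · convert hs using 1
        ext u
        simp only [Set.mem_ofPred_eq, Set.mem_insert_iff, Function.update_self]
        constructor
        · rintro ⟨rfl | hu, hlt⟩
          · simp at hlt
          · exact hu
        · intro hu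
          exact ⟨Or.inr hu, by rw [hup u hu]; exact h2 u hu⟩
      · convert h3 a ha using 1
        ext u
        simp only [Set.mem_ofPred_eq, Set.mem_insert_iff]
        rw [hup a ha]
        constructor
        · rintro ⟨rfl | hu, hlt⟩
          · have := h2 a ha
            simp at hlt
            omega
          · rw [hup u hu] at hlt
            exact ⟨hu, hlt⟩
        · rintro ⟨hu, hlt⟩
          exact ⟨Or.inr hu, by rw [hup u hu]; exact hlt⟩

lemma Legit.extend {W : Type*} [Finite W] {G : SimpleGraph W} {K : ℕ} {Q E : Set W}
    (h : Legit G K Q) (hQ : Q ⊆ E)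
    (hc : ColOn G {w | w ∉ Q ∧ ∃ u ∈ E, G.Adj u w} K) : Legit G K E := by
  classical
  have main : ∀ S : Set W, S.Finite → S ⊆ E → Legit G K (Q ∪ S) := by
    intro S hS
    induction S, hS using Set.Finite.induction_on with
    | empty => intro _; simpa using h
    | @insert v S hv hS ih =>
      intro hSE
      have hL := ih ((Set.subset_insert v S).trans hSE)
      have hvE : v ∈ E := hSE (Set.mem_insert v S)
      by_cases hvQ : v ∈ Q ∪ S
      · rw [Set.union_insert, Set.insert_eq_of_mem hvQ]; exact hL
      · rw [Set.union_insert]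
        have hsub : Q ∪ S ⊆ E := Set.union_subset hQ ((Set.subset_insert v S).trans hSE)
        refine Legit.step _ v hL hvQ ?_
        rintro ⟨u, hu, huv⟩
        refine hc.mono ?_
        rintro y ⟨hy, hy'⟩
        refine ⟨fun hyQ => hy (Or.inl hyQ), ?_⟩
        rcases hy' with rfl | h1 | ⟨z, hz, h1⟩
        · exact ⟨u, hsub hu, huv⟩
        · exact ⟨v, hvE, h1⟩
        · exact ⟨z, hsub hz, h1⟩
  have := main E (Set.toFinite E) subset_rfl
  rwa [Set.union_eq_self_of_subset_left hQ] at this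

/-! ### The graph `Rm` -/

lemma Rm_adj_some {W : Type*} {H : SimpleGraph W} {l : ℕ} {i j : Fin l} {u v : W}
    (hij : i ≠ j) (h : H.Adj u v) : (Rm H l).Adj (i, some u) (j, some v) := by
  simp only [Rm, SimpleGraph.fromRel_adj]
  exact ⟨fun h' => hij (congrArg Prod.fst h'), Or.inl (Or.inr ⟨hij, u, v, rfl, rfl, h⟩)⟩

lemma Rm_adj_none {W : Type*} {H : SimpleGraph W} {l : ℕ} (i : Fin l) (v : W) :
    (Rm H l).Adj (i, none) (i, some v) := by
  simp only [Rm, SimpleGraph.fromRel_adj]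
  exact ⟨by simp, Or.inl (Or.inl (by simp))⟩

lemma Rm_map {W W' : Type*} {H : SimpleGraph W} {H' : SimpleGraph W'} {l l' : ℕ}
    (e : Fin l' → Fin l) (he : Function.Injective e) (g : W' → W)
    (hg : ∀ u v, H'.Adj u v → H.Adj (g u) (g v)) (p q : Fin l' × Option W')
    (h : (Rm H' l').Adj p q) :
    (Rm H l).Adj (e p.1, p.2.map g) (e q.1, q.2.map g) := by
  obtain ⟨i, a⟩ := p
  obtain ⟨j, b⟩ := q
  simp only [Rm, SimpleGraph.fromRel_adj] at h
  obtain ⟨hne, h⟩ := h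
  rcases h with (⟨h1, h2⟩ | ⟨h1, u, v, h2, h3, h4⟩) | (⟨h1, h2⟩ | ⟨h1, u, v, h2, h3, h4⟩)
  · subst h1 h2
    cases b with
    | none => exact absurd rfl hne
    | some b => exact Rm_adj_none _ _
  · subst h2 h3
    exact Rm_adj_some (fun h => h1 (he h)) (hg _ _ h4)
  · subst h1 h2
    cases a with
    | none => exact absurd rfl hne
    | some b => exact (Rm_adj_none _ _).symm
  · subst h2 h3
    exact (Rm_adj_some (fun h => h1 (he h)) (hg _ _ h4)).symm

/-- A colour occurring in two layers. -/
lemma exists_rep_s11 {W : Type*} {l c : ℕ} {J : Finset (Fin l)} (hJ : c < J.card)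
    {col : Fin l × Option W → ℕ} {w : W} (h : ∀ j ∈ J, col (j, some w) < c) :
    ∃ x, x < c ∧ ∀ b : Fin l, ∃ j ∈ J, j ≠ b ∧ col (j, some w) = x := by
  obtain ⟨i, hi, j, hj, hij, heq⟩ := Finset.exists_ne_map_eq_of_card_lt_of_maps_to
    (s := J) (t := Finset.range c) (by simpa using hJ) (f := fun j => col (j, some w))
    (by intro j hj; simpa using h j hj)
  refine ⟨col (i, some w), h i hi, fun b => ?_⟩
  by_cases hb : i = b
  · exact ⟨j, hj, fun h => hij (hb.trans h.symm), heq.symm⟩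
  · exact ⟨i, hi, hb, rfl⟩

lemma col_apex {W : Type*} {H : SimpleGraph W} {l c : ℕ} {X : Set (Fin l × Option W)}
    (hX : ColOn (Rm H l) X c) {J : Finset (Fin l)} (hJ : c < J.card) {b : Fin l} (hb : b ∈ J)
    {Y : Set W} (hY : ∀ j ∈ J, ∀ w ∈ Y, (j, some w) ∈ X) (hbX : (b, none) ∈ X) :
    ∃ c₀ < c, ∃ φ : W → ℕ, (∀ w ∈ Y, φ w < c ∧ φ w ≠ c₀) ∧
      ∀ u ∈ Y, ∀ w ∈ Y, H.Adj u w → φ u ≠ φ w := by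
  classical
  obtain ⟨col, h1, h2⟩ := hX
  have hrep : ∀ w, ∃ x, w ∈ Y → (x < c ∧ ∀ b : Fin l, ∃ j ∈ J, j ≠ b ∧ col (j, some w) = x) := by
    intro w
    by_cases hw : w ∈ Y
    · obtain ⟨x, hx⟩ := exists_rep_s11 hJ (col := col) (w := w) (fun j hj => h1 _ (hY j hj w hw))
      exact ⟨x, fun _ => hx⟩
    · exact ⟨0, fun h => absurd h hw⟩
  choose ψ hψ using hrep
  have hap : ∀ w ∈ Y, col (b, some w) ≠ col (b, none) := fun w hw =>
    (h2 _ hbX _ (hY b hb w hw) (Rm_adj_none b w)).symm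
  -- a representative colour differs from any colour at an adjacent vertex
  have hdiff : ∀ u ∈ Y, ∀ w ∈ Y, H.Adj u w → ∀ i ∈ J, ψ u ≠ col (i, some w) := by
    intro u hu w hw huw i hi
    obtain ⟨j, hj, hji, hjc⟩ := (hψ u hu).2 i
    rw [← hjc]
    exact h2 _ (hY j hj u hu) _ (hY i hi w hw) (Rm_adj_some hji huw)
  have hdiff2 : ∀ u ∈ Y, ∀ w ∈ Y, H.Adj u w → ψ u ≠ ψ w := by
    intro u hu w hw huw
    obtain ⟨i, hi, -, hic⟩ := (hψ w hw).2 b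
    rw [← hic]
    exact hdiff u hu w hw huw i hi
  refine ⟨col (b, none), h1 _ hbX,
    fun w => if ψ w = col (b, none) then col (b, some w) else ψ w, ?_, ?_⟩
  · intro w hw
    by_cases hc : ψ w = col (b, none)
    · simp only [hc, if_true]
      exact ⟨h1 _ (hY b hb w hw), hap w hw⟩
    · simp only [hc, if_false]
      exact ⟨(hψ w hw).1, hc⟩
  · intro u hu w hw huw
    by_cases hcu : ψ u = col (b, none) <;> by_cases hcw : ψ w = col (b, none)
    · exact absurd (hcu.trans hcw.symm) (hdiff2 u hu w hw huw)
    · simp only [hcu, hcw, if_true, if_false]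
      exact (hdiff w hw u hu huw.symm b hb).symm
    · simp only [hcu, hcw, if_true, if_false]
      exact hdiff u hu w hw huw b hb
    · simp only [hcu, hcw, if_false]
      exact hdiff2 u hu w hw huw

lemma col_apex' {W : Type*} {H : SimpleGraph W} {l K : ℕ} {X : Set (Fin l × Option W)}
    (hX : ColOn (Rm H l) X (K + 1)) {J : Finset (Fin l)} (hJ : K + 1 < J.card) {b : Fin l}
    (hb : b ∈ J) {Y : Set W} (hY : ∀ j ∈ J, ∀ w ∈ Y, (j, some w) ∈ X) (hbX : (b, none) ∈ X) :
    ColOn H Y K := by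
  obtain ⟨c₀, hc₀, φ, h1, h2⟩ := col_apex hX hJ hb hY hbX
  refine ⟨fun w => if φ w = K then c₀ else φ w, ?_, ?_⟩
  · intro w hw
    have := h1 w hw
    dsimp only
    split_ifs <;> omega
  · intro u hu w hw huw
    have := h1 w hw
    have := h1 u hu
    have := h2 u hu w hw huw
    dsimp only
    split_ifs <;> omega

lemma col_plain {W : Type*} {H : SimpleGraph W} {l c : ℕ} {X : Set (Fin l × Option W)}
    (hX : ColOn (Rm H l) X c) {J : Finset (Fin l)} (hJ : c < J.card) (b : Fin l)
    {Y D : Set W} (hY : ∀ j ∈ J, ∀ w ∈ Y, (j, some w) ∈ X) (hD : ∀ d ∈ D, (b, some d) ∈ X)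
    (hI : ∀ d ∈ D, ∀ d' ∈ D, ¬ H.Adj d d') : ColOn H (Y ∪ D) c := by
  classical
  obtain ⟨col, h1, h2⟩ := hX
  have hrep : ∀ w, ∃ x, w ∈ Y → (x < c ∧ ∀ b : Fin l, ∃ j ∈ J, j ≠ b ∧ col (j, some w) = x) := by
    intro w
    by_cases hw : w ∈ Y
    · obtain ⟨x, hx⟩ := exists_rep_s11 hJ (col := col) (w := w) (fun j hj => h1 _ (hY j hj w hw))
      exact ⟨x, fun _ => hx⟩
    · exact ⟨0, fun h => absurd h hw⟩
  choose ψ hψ using hrep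
  have hdiff : ∀ u ∈ Y, ∀ w i, (i, some w) ∈ X → H.Adj u w → ψ u ≠ col (i, some w) := by
    intro u hu w i hw huw
    obtain ⟨j, hj, hji, hjc⟩ := (hψ u hu).2 i
    rw [← hjc]
    exact h2 _ (hY j hj u hu) _ hw (Rm_adj_some hji huw)
  have hdiff2 : ∀ u ∈ Y, ∀ w ∈ Y, H.Adj u w → ψ u ≠ ψ w := by
    intro u hu w hw huw
    obtain ⟨i, hi, -, hic⟩ := (hψ w hw).2 b
    rw [← hic]
    exact hdiff u hu w i (hY i hi w hw) huw
  refine ⟨fun w => if w ∈ Y then ψ w else col (b, some w), ?_, ?_⟩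
  · intro w hw
    by_cases hwY : w ∈ Y
    · simpa only [hwY, if_true] using (hψ w hwY).1
    · simp only [hwY, if_false]
      exact h1 _ (hD w (hw.resolve_left hwY))
  · intro u hu w hw huw
    by_cases hcu : u ∈ Y <;> by_cases hcw : w ∈ Y
    · simp only [hcu, hcw, if_true]
      exact hdiff2 u hcu w hcw huw
    · simp only [hcu, hcw, if_true, if_false]
      exact hdiff u hcu w b (hD w (hw.resolve_left hcw)) huw
    · simp only [hcu, hcw, if_true, if_false]
      exact (hdiff w hcw u b (hD u (hu.resolve_left hcu)) huw.symm).symm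
    · exact absurd huw (hI u (hu.resolve_left hcu) w (hw.resolve_left hcw))

/-- First touches and the set of layers without first touches. -/
lemma first_touch {W : Type*} [Fintype W] {l c : ℕ} (hl : Fintype.card W + c + 1 ≤ l)
    (f : Fin l × Option W → ℕ) : ∃ (a : W → Fin l) (J : Finset (Fin l)),
      (∀ w i, f (a w, some w) ≤ f (i, some w)) ∧ (∀ w, a w ∉ J) ∧ c < J.card := by
  classical
  have : Nonempty (Fin l) := ⟨⟨0, by omega⟩⟩
  have h : ∀ w : W, ∃ a : Fin l, ∀ i, f (a, some w) ≤ f (i, some w) := fun w =>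
    Finite.exists_min (fun i => f (i, some w))
  choose a ha using h
  refine ⟨a, (Finset.univ.image a)ᶜ, ha, by simp, ?_⟩
  rw [Finset.card_compl, Fintype.card_fin]
  have : (Finset.univ.image a).card ≤ Fintype.card W := Finset.card_image_le
  omega

/-- Last time at which the touched set is good. -/
lemma last_time {W : Type*} [Finite W] (P : Set W → Prop) (g : W → ℕ) (h0 : P ∅)
    (hu : ¬ P Set.univ) : ∃ T, P {w | g w < T} ∧ ∀ t, T < t → ¬ P {w | g w < t} := by
  classical
  obtain ⟨M, hM⟩ := (Set.finite_range g).bddAbove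
  have hbig : ∀ t, M < t → ¬ P {w | g w < t} := by
    intro t ht
    have : {w | g w < t} = Set.univ := by
      ext w
      have := hM ⟨w, rfl⟩
      simp
      omega
    rwa [this]
  have h0' : P {w | g w < 0} := by simpa using h0
  refine ⟨Nat.findGreatest (fun t => P {w | g w < t}) M,
    Nat.findGreatest_spec (P := fun t => P {w | g w < t}) (Nat.zero_le M) h0', ?_⟩
  intro t ht
  by_cases htM : t ≤ M
  · exact Nat.findGreatest_is_greatest ht htM
  · exact hbig t (by omega)

lemma exists_min_time {α : Type*} (f : α → ℕ) (P : α → Prop) (h : ∃ x, P x) :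
    ∃ x, P x ∧ ∀ y, P y → f x ≤ f y := by
  obtain ⟨x, hx, hm⟩ := (InvImage.wf f Nat.lt_wfRel.wf).has_min {x | P x} h
  exact ⟨x, hx, fun y hy => not_lt.mp (hm y hy)⟩

/-- Lemma A. -/
lemma legit_of_Rm {W : Type*} [Fintype W] (H : SimpleGraph W) {l K : ℕ}
    (hl : Fintype.card W + 2 * K + 3 ≤ l) (f : Fin l × Option W → ℕ)
    (hf : Function.Injective f) (hbag : ∀ x, ColOn (Rm H l) (lb (Rm H l) f x) (K + 1)) :
    Legit H K Set.univ := by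
  classical
  by_contra hcon
  obtain ⟨a, J, ha, haJ, hJ⟩ := first_touch (c := 2 * K + 2) (by omega) f
  obtain ⟨T, hT, hmax⟩ := last_time (Legit H K) (fun w => f (a w, some w)) Legit.empty hcon
  set Q : Set W := {w | f (a w, some w) < T} with hQdef
  have hnQ : ∀ w, w ∉ Q → ∀ i, T ≤ f (i, some w) := by
    intro w hw i
    have := ha w i
    simp only [hQdef, Set.mem_ofPred_eq, not_lt] at hw
    omega
  have hsplit := Finset.card_filter_add_card_filter_not (s := J) (fun b => f (b, none) < T)
  by_cases hd : K + 1 < (J.filter (fun b => f (b, none) < T)).card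
  · -- many apexes done
    set Jd := J.filter (fun b => f (b, none) < T) with hJd
    obtain ⟨b, hb, hbm⟩ := Jd.exists_max_image (fun b => f (b, none))
      (Finset.card_pos.mp (by omega))
    have hcol : ColOn H Qᶜ K := by
      refine col_apex' (hbag (b, none)) hd hb ?_ (mem_lb_self _ _ _)
      intro j hj w hw
      refine mem_lb_of_adj hf ?_ (hbm j hj) (Rm_adj_none j w)
      have h1 := hnQ w hw j
      have h2 := (Finset.mem_filter.mp hb).2
      omega
    exact hcon (hT.extend (Set.subset_univ _) (hcol.mono fun w hw => hw.1))
  · set Ju := J.filter (fun b => ¬ f (b, none) < T) with hJu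
    have hu : K + 1 < Ju.card := by omega
    have hJuT : ∀ b ∈ Ju, T ≤ f (b, none) := fun b hb => not_lt.mp (Finset.mem_filter.mp hb).2
    obtain ⟨x, ⟨hxT, b, hb, hbx⟩, hxm⟩ := exists_min_time f
      (fun x => T ≤ f x ∧ ∃ b ∈ Ju, (b, none) ∈ lb (Rm H l) f x) (by
        obtain ⟨b, hb⟩ := Finset.card_pos.mp (by omega : 0 < Ju.card)
        exact ⟨(b, none), hJuT b hb, b, hb, mem_lb_self _ _ _⟩)
    refine hmax (f x + 1) (by omega) (hT.extend ?_ ?_)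
    · intro w hw
      simp only [hQdef, Set.mem_ofPred_eq] at hw ⊢
      omega
    · refine col_apex' (hbag x) hu hb ?_ hbx
      rintro j hj w ⟨hwQ, u, hu, huw⟩
      have hjJ : j ∈ J := (Finset.mem_filter.mp hj).1
      have hne : a u ≠ j := fun h => haJ u (h ▸ hjJ)
      refine mem_lb_of_adj hf ?_ (Nat.lt_succ_iff.mp hu) (Rm_adj_some hne huw)
      by_contra hlt
      rw [not_le] at hlt
      by_cases h1 : f (j, some w) ≤ f (j, none)
      · have := hxm (j, some w) ⟨hnQ w hwQ j, j, hj,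
          mem_lb_of_adj hf h1 le_rfl (Rm_adj_none j w).symm⟩
        omega
      · have := hxm (j, none) ⟨hJuT j hj, j, hj, mem_lb_self _ _ _⟩
        omega

/-- Lemma B. -/
lemma chain_of_special {V : Type*} [Fintype V] (G : SimpleGraph V) {m K : ℕ}
    (hm : Fintype.card V + K + 1 ≤ m) (f : Fin m × Option V → ℕ)
    (hf : Function.Injective f)
    (hbag : ∀ x, (∃ y, f y < f x ∧ (Rm G m).Adj y x) → ColOn (Rm G m) (lb (Rm G m) f x) K) :
    Chain G K Set.univ := by
  classical
  by_contra hcon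
  obtain ⟨a, J, ha, haJ, hJ⟩ := first_touch (c := K) hm f
  obtain ⟨T, hT, hmax⟩ := last_time (Chain G K) (fun w => f (a w, some w)) (Chain.empty G K) hcon
  set Q : Set V := {w | f (a w, some w) < T} with hQdef
  have hnQ : ∀ w, w ∉ Q → ∀ i, T ≤ f (i, some w) := by
    intro w hw i
    have := ha w i
    simp only [hQdef, Set.mem_ofPred_eq, not_lt] at hw
    omega
  have hfin : ∀ t, T < t → ¬ ColOn G (closedNbhd G {w | f (a w, some w) < t} \ Q) K := by
    intro t ht h
    refine hmax t ht (hT.extend ?_ h)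
    intro w hw
    simp only [hQdef, Set.mem_ofPred_eq] at hw ⊢
    omega
  obtain ⟨v₀, hv₀⟩ : ∃ v, v ∉ Q := by
    by_contra h
    push Not at h
    exact hcon ((Set.eq_univ_of_forall h) ▸ hT)
  obtain ⟨j₀, hj₀⟩ := Finset.card_pos.mp (by omega : 0 < J.card)
  obtain ⟨x, ⟨b, hb, v, hv, hxbv⟩, hxm⟩ := exists_min_time f
    (fun x => ∃ b ∈ J, ∃ v, v ∉ Q ∧ x = (b, some v)) ⟨_, j₀, hj₀, v₀, hv₀, rfl⟩
  have hxm' : ∀ j ∈ J, ∀ w, w ∉ Q → f x ≤ f (j, some w) := fun j hj w hw =>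
    hxm _ ⟨j, hj, w, hw, rfl⟩
  have hTx : T ≤ f x := hxbv ▸ hnQ v hv b
  by_cases hcase : f (b, none) < f x
  · refine hfin (f x + 1) (by omega) ?_
    set E : Set V := {w | f (a w, some w) < f x + 1} with hE
    have hcol := col_plain (hbag x ⟨(b, none), hcase, hxbv ▸ Rm_adj_none b v⟩) hJ b
      (Y := {w | w ∉ Q ∧ ∃ u ∈ E, G.Adj u w})
      (D := {w | w ∉ Q ∧ w ∈ E ∧ ∀ u ∈ E, ¬ G.Adj u w}) ?_ ?_ ?_
    · refine hcol.mono ?_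
      rintro w ⟨hw, hwQ⟩
      by_cases h : ∃ u ∈ E, G.Adj u w
      · exact Or.inl ⟨hwQ, h⟩
      · refine Or.inr ⟨hwQ, hw.resolve_right h, ?_⟩
        push Not at h
        exact h
    · rintro j hj w ⟨hwQ, u, hu, huw⟩
      have hne : a u ≠ j := fun h => haJ u (h ▸ hj)
      exact mem_lb_of_adj hf (hxm' j hj w hwQ) (Nat.lt_succ_iff.mp hu) (Rm_adj_some hne huw)
    · rintro d ⟨hdQ, -, -⟩
      exact mem_lb_of_adj hf (hxm' b hb d hdQ) hcase.le (Rm_adj_none b d)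
    · rintro d ⟨-, hd, -⟩ d' ⟨-, -, hd'⟩
      exact hd' d hd
  · rw [not_lt] at hcase
    have hxlt : f x < f (b, none) := by
      refine lt_of_le_of_ne hcase fun h => ?_
      have := hf h
      rw [hxbv] at this
      simp at this
    obtain ⟨y, ⟨hxy, hy⟩, hym⟩ := exists_min_time f
      (fun y => f x ≤ f y ∧ ∃ z, f z < f y ∧ (Rm G m).Adj z y)
      ⟨(b, none), hcase, x, hxlt, hxbv ▸ (Rm_adj_none b v).symm⟩
    have hyb : f y ≤ f (b, none) :=
      hym _ ⟨hcase, x, hxlt, hxbv ▸ (Rm_adj_none b v).symm⟩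
    have hbmem : (b, none) ∈ lb (Rm G m) f y :=
      mem_lb_of_adj hf hyb hxy (hxbv ▸ (Rm_adj_none b v).symm)
    refine hfin (f y + 1) (by omega) ?_
    set E : Set V := {w | f (a w, some w) < f y + 1} with hE
    set E' : Set V := {w | f (a w, some w) < f y} with hE'
    have hEE : E' ⊆ E := fun w hw => Nat.lt_succ_of_lt hw
    set D : Set V := {w | w ∉ Q ∧ ((w ∈ E' ∧ ∀ u ∈ E', ¬ G.Adj u w) ∨
      (w ∈ E ∧ ∀ u ∈ E, ¬ G.Adj u w))} with hD
    obtain ⟨c₀, hc₀, φ, h1, h2⟩ := col_apex (hbag y hy) hJ hb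
      (Y := (closedNbhd G E \ Q) \ D) (by
        rintro j hj w ⟨⟨hw, hwQ⟩, hwD⟩
        have hex : ∃ u ∈ E, G.Adj u w := by
          by_contra h
          refine hwD ⟨hwQ, Or.inr ⟨hw.resolve_right h, ?_⟩⟩
          push Not at h
          exact h
        obtain ⟨u, hu, huw⟩ := hex
        have hne : a u ≠ j := fun h => haJ u (h ▸ hj)
        refine mem_lb_of_adj hf ?_ (Nat.lt_succ_iff.mp hu) (Rm_adj_some hne huw)
        by_contra hlt
        rw [not_le] at hlt
        have hxs := hxm' j hj w hwQ
        refine hwD ⟨hwQ, Or.inl ⟨lt_of_le_of_lt (ha w j) hlt, ?_⟩⟩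
        intro u' hu' hadj
        have hne' : a u' ≠ j := fun h => haJ u' (h ▸ hj)
        have hA : (Rm G m).Adj (a u', some u') (j, some w) := Rm_adj_some hne' hadj
        have hu'' : f (a u', some u') < f y := hu'
        rcases lt_trichotomy (f (a u', some u')) (f (j, some w)) with h | h | h
        · have := hym (j, some w) ⟨hxs, _, h, hA⟩
          omega
        · exact hA.ne (hf h)
        · have := hym (a u', some u') ⟨by omega, _, h, hA.symm⟩
          omega) hbmem
    refine ⟨fun w => if w ∈ D then c₀ else φ w, ?_, ?_⟩
    · intro w hw
      by_cases hwD : w ∈ D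
      · simpa only [hwD, if_true] using hc₀
      · simpa only [hwD, if_false] using (h1 w ⟨hw, hwD⟩).1
    · intro u hu w hw huw
      by_cases huD : u ∈ D <;> by_cases hwD : w ∈ D
      · exfalso
        obtain ⟨-, hu' | hu'⟩ := huD <;> obtain ⟨-, hw' | hw'⟩ := hwD
        · exact hw'.2 u hu'.1 huw
        · exact hw'.2 u (hEE hu'.1) huw
        · exact hu'.2 w (hEE hw'.1) huw.symm
        · exact hw'.2 u hu'.1 huw
      · simp only [huD, hwD, if_true, if_false]
        exact (h1 w ⟨hw, hwD⟩).2.symm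
      · simp only [huD, hwD, if_true, if_false]
        exact (h1 u ⟨hu, huD⟩).2
      · simp only [huD, hwD, if_false]
        exact h2 u ⟨hu, huD⟩ w ⟨hw, hwD⟩ huw

lemma pathChromatic_le {W : Type*} {G : SimpleGraph W} {c : ℕ} (h : HasPD G c) :
    pathChromatic G ≤ c := by
  obtain ⟨s, B, h1, h2⟩ := h
  exact Nat.sInf_le ⟨s, B, h1, fun t => (colOn_iff _ _ _).mp (h2 t)⟩

lemma hasPD_card {W : Type*} [Fintype W] (G : SimpleGraph W) : HasPD G (Fintype.card W) := by
  refine ⟨1, fun _ => Set.univ, ⟨by simp, by simp, by simp⟩, fun _ => ?_⟩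
  refine ⟨fun x => Fintype.equivFin W x, fun x _ => (Fintype.equivFin W x).2, ?_⟩
  intro x _ y _ hxy h
  exact hxy.ne ((Fintype.equivFin W).injective (Fin.ext h))

lemma HasPD.mono_right {W : Type*} {G : SimpleGraph W} {c d : ℕ} (h : HasPD G c) (hcd : c ≤ d) :
    HasPD G d := by
  obtain ⟨s, B, h1, h2⟩ := h
  refine ⟨s, B, h1, fun t => ?_⟩
  obtain ⟨φ, h3, h4⟩ := h2 t
  exact ⟨φ, fun x hx => (h3 x hx).trans_le hcd, h4⟩

lemma hasPD_pathChromatic {W : Type*} [Fintype W] (G : SimpleGraph W) :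
    HasPD G (pathChromatic G) := by
  obtain ⟨s, B, h1, h2⟩ := hasPD_card G
  have := Nat.sInf_mem (s := {k | ∃ (s : ℕ) (B : Fin s → Set W), IsPathDecomp G B ∧
    ∀ t, (G.induce (B t)).Colorable k})
    ⟨_, s, B, h1, fun t => (colOn_iff _ _ _).mp (h2 t)⟩
  obtain ⟨s', B', h1', h2'⟩ := this
  exact ⟨s', B', h1', fun t => (colOn_iff _ _ _).mpr (h2' t)⟩

/-- Theorem 3: for `m ≥ n + k + 2` and `l ≥ m(n+1) + k + 3`,
`χ_P(R_l(R_m(G))) > k`. -/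
theorem stmt_11 {V : Type u} [Fintype V] (G : SimpleGraph V) {n k m l : ℕ}
    (hn : Fintype.card V = n) (hG : pathChromatic G = k)
    (hm : n + k + 2 ≤ m) (hl : m * (n + 1) + k + 3 ≤ l) :
    k < pathChromatic (Rm (Rm G m) l) := by
  by_contra hcon
  rw [not_lt] at hcon
  have hPD : HasPD (Rm (Rm G m) l) k := (hasPD_pathChromatic _).mono_right hcon
  have hkn : k ≤ n := hG ▸ hn ▸ pathChromatic_le (hasPD_card G)
  cases k with
  | zero =>
    obtain ⟨s, B, ⟨h1, -, -⟩, h2⟩ := hPD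
    obtain ⟨t, ht⟩ := h1 (⟨0, by omega⟩, none)
    obtain ⟨φ, h3, -⟩ := h2 t
    exact absurd (h3 _ ht) (Nat.not_lt_zero _)
  | succ K =>
    obtain ⟨m', rfl⟩ : ∃ m', m = m' + 1 := ⟨m - 1, by omega⟩
    have hPD' : HasPD (Rm (Rm G m') l) (K + 1) :=
      hPD.comap (fun p => (p.1, p.2.map fun q => (Fin.castSucc q.1, q.2.map id)))
        (Rm_map id Function.injective_id _
          (Rm_map Fin.castSucc (Fin.castSucc_injective _) id fun _ _ h => h))
    obtain ⟨f, hf, hbag⟩ := hPD'.layout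
    have hcard : Fintype.card (Fin m' × Option V) = m' * (n + 1) := by simp [hn]
    have hL := legit_of_Rm (Rm G m') (K := K) (by rw [hcard]; linarith) f hf hbag
    obtain ⟨g, N, hg, -, hstep⟩ := hL.layout
    have hC := chain_of_special G (K := K) (m := m') (by omega) g
      (Set.injOn_univ.mp hg) (by
        rintro x ⟨y, hy, hyx⟩
        have := hstep x (Set.mem_univ x) ⟨y, ⟨Set.mem_univ y, hy⟩, hyx⟩
        simpa [lb] using this)
    have := pathChromatic_le hC.hasPD
    omega
end
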